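/- arXiv:2603.20046 — 2 statements merged into one kernel-verified Lean document; each statement's English description precedes it below -/
import Mathlib

section
/- Let Ω be a nonempty finite type, let E be a real inner product space, let p : Ω → ℝ be a probability mass function (p(τ) ≥ 0 and ∑_{τ} p(τ) = 1), let g : Ω → E, and let R_I, R_T : Ω → ℝ be two reward functions whose gap is uniformly bounded: |R_I(τ) - R_T(τ)| ≤ W for all τ ∈ Ω, where W ≥ 0. Define the policy gradients g_{R_I} = ∑_{τ} p(τ) • (R_I(τ) • g(τ)) and g_{R_T} = ∑_{τ} p(τ) • (R_T(τ) • g(τ)). Then ‖g_{R_I} - g_{R_T}‖ ≤ √(∑_{τ} p(τ)·‖g(τ)‖²) · W. -/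
open Filter Finset
open scoped Topology

section WeightedSums

variable {ι : Type*} {s : Finset ι} {p : ι → ℝ}

theorem sum_mul_le_sqrt_sum_mul_sqrt_sum_mul_sq (hp : ∀ i ∈ s, 0 ≤ p i) (x : ι → ℝ) :
    ∑ i ∈ s, p i * x i ≤ √(∑ i ∈ s, p i) * √(∑ i ∈ s, p i * x i ^ 2) := by
  rw [← Real.sqrt_mul (sum_nonneg hp)]
  refine Real.le_sqrt_of_sq_le (sum_sq_le_sum_mul_sum_of_sq_le_mul s hp ?_ ?_)
  · exact fun i hi ↦ mul_nonneg (hp i hi) (sq_nonneg (x i))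
  · exact fun i _ ↦ le_of_eq (by ring)

variable {E : Type*} [SeminormedAddCommGroup E] [NormedSpace ℝ E]

theorem norm_sum_smul_smul_le_sum_mul_norm_mul {c : ι → ℝ} {W : ℝ}
    (hp : ∀ i ∈ s, 0 ≤ p i) (hc : ∀ i ∈ s, |c i| ≤ W) (g : ι → E) :
    ‖∑ i ∈ s, p i • (c i • g i)‖ ≤ (∑ i ∈ s, p i * ‖g i‖) * W := by
  rw [sum_mul]
  refine norm_sum_le_of_le s fun i hi ↦ ?_
  have hpi := hp i hi
  calc
    ‖p i • (c i • g i)‖ = p i * ‖g i‖ * |c i| := by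
      rw [norm_smul, norm_smul, Real.norm_of_nonneg hpi, Real.norm_eq_abs]
      ring
    _ ≤ p i * ‖g i‖ * W := by gcongr; exact hc i hi

theorem norm_sum_smul_smul_le_sqrt_mul_sqrt_mul {c : ι → ℝ} {W : ℝ} (hW : 0 ≤ W)
    (hp : ∀ i ∈ s, 0 ≤ p i) (hc : ∀ i ∈ s, |c i| ≤ W) (g : ι → E) :
    ‖∑ i ∈ s, p i • (c i • g i)‖ ≤ √(∑ i ∈ s, p i) * √(∑ i ∈ s, p i * ‖g i‖ ^ 2) * W :=
  (norm_sum_smul_smul_le_sum_mul_norm_mul hp hc g).trans <|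
    mul_le_mul_of_nonneg_right (sum_mul_le_sqrt_sum_mul_sqrt_sum_mul_sq hp _) hW

end WeightedSums

theorem policy_gradient_gap_le_general
    {Ω E : Type*} [SeminormedAddCommGroup E] [NormedSpace ℝ E]
    {p : Ω → ℝ} {g : Ω → E} {R_I R_T : Ω → ℝ} {m V W : ℝ} {G_I G_T : E}
    (hp0 : ∀ τ, 0 ≤ p τ) (hp : HasSum p m) (hg : HasSum (fun τ ↦ p τ * ‖g τ‖ ^ 2) V)
    (hI : HasSum (fun τ ↦ p τ • (R_I τ • g τ)) G_I)
    (hT : HasSum (fun τ ↦ p τ • (R_T τ • g τ)) G_T)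
    (hW : 0 ≤ W) (hgap : ∀ τ, |R_I τ - R_T τ| ≤ W) :
    ‖G_I - G_T‖ ≤ √m * √V * W := by
  have hgradient : HasSum (fun τ ↦ p τ • ((R_I τ - R_T τ) • g τ)) (G_I - G_T) := by
    simpa only [sub_smul, smul_sub] using hI.sub hT
  have hbound : Tendsto (fun s : Finset Ω ↦ √(∑ τ ∈ s, p τ) * √(∑ τ ∈ s, p τ * ‖g τ‖ ^ 2) * W)
      atTop (𝓝 (√m * √V * W)) :=
    ((Tendsto.sqrt hp).mul (Tendsto.sqrt hg)).mul_const W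
  exact le_of_tendsto_of_tendsto' (Tendsto.norm hgradient) hbound fun s ↦
    norm_sum_smul_smul_le_sqrt_mul_sqrt_mul hW (fun τ _ ↦ hp0 τ) (fun τ _ ↦ hgap τ) g

/-- If the pointwise gap between the ideal reward `R_I` and the estimated reward `R_T`
is uniformly bounded by `W`, then the gap between the corresponding policy gradients is
bounded by the weighted L² norm of the score times `W`. -/
theorem policy_gradient_gap_le
    {Ω : Type*} [Fintype Ω] [Nonempty Ω]
    {E : Type*} [NormedAddCommGroup E] [InnerProductSpace ℝ E]
    (p : Ω → ℝ) (hp0 : ∀ τ, 0 ≤ p τ) (hp1 : ∑ τ, p τ = 1)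
    (g : Ω → E) (R_I R_T : Ω → ℝ) (W : ℝ) (hW : 0 ≤ W)
    (hgap : ∀ τ, |R_I τ - R_T τ| ≤ W) :
    ‖(∑ τ, p τ • (R_I τ • g τ)) - ∑ τ, p τ • (R_T τ • g τ)‖ ≤
      Real.sqrt (∑ τ, p τ * ‖g τ‖ ^ 2) * W := by
  simpa [hp1] using policy_gradient_gap_le_general hp0 (hasSum_fintype p) (hasSum_fintype _)
    (hasSum_fintype _) (hasSum_fintype _) hW hgap
end

section
/- Let Ω be a nonempty finite type (the trajectory space), let E be a real inner product space, let p : Ω → ℝ be a probability mass function (p(τ) ≥ 0 and ∑_{τ} p(τ) = 1), and let g : Ω → E be the score map. Let there be K rubric items with nonnegative weights w : Fin K → ℝ (w(j) ≥ 0 for all j), and let S : Ω → Finset (Fin K) assign to each trajectory the set of rubrics it satisfies. Define the ideal reward R_I(τ) = ∑_{j} w(j) and the estimated reward R_T(τ) = ∑_{j ∈ S(τ)} w(j). Suppose there is a fixed set N ⊆ Fin K of unmet rubrics such that every rubric unsatisfied by any trajectory lies in N, i.e., (Fin K) \ S(τ) ⊆ N for all τ ∈ Ω. Then the gradient gap satisfies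 ‖∑_{τ} p(τ) • (R_I(τ) • g(τ)) - ∑_{τ} p(τ) • (R_T(τ) • g(τ))‖ ≤ √(∑_{τ} p(τ)·‖g(τ)‖²) · ∑_{j ∈ N} w(j), i.e., the deviation of the estimated policy gradient from the ideal one is upper-bounded by the L² norm of the score times the ℓ¹ norm of the weights of the unmet rubrics. -/
/-!
The gradient gap is itself a policy gradient, for the reward `R_I - R_T`. The Cauchy–Schwarz
inequality for the weights `p` bounds it by the `L²` norm of that reward times the `L²` norm of
the score, and `R_I - R_T` is uniformly bounded by the `ℓ¹` weight of the unmet rubrics.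
-/

theorem norm_sum_sub_sum_le_sum_norm {ι F : Type*} [DecidableEq ι] [SeminormedAddCommGroup F]
    (w : ι → F) {s t u : Finset ι} (hst : s ⊆ t) (hu : t \ s ⊆ u) :
    ‖∑ j ∈ t, w j - ∑ j ∈ s, w j‖ ≤ ∑ j ∈ u, ‖w j‖ :=
  calc
    ‖∑ j ∈ t, w j - ∑ j ∈ s, w j‖ = ‖∑ j ∈ t \ s, w j‖ := by
      rw [Finset.sum_sdiff_eq_sub hst]
    _ ≤ ∑ j ∈ t \ s, ‖w j‖ := norm_sum_le _ _
    _ ≤ ∑ j ∈ u, ‖w j‖ :=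
      Finset.sum_le_sum_of_subset_of_nonneg hu fun j _ _ ↦ norm_nonneg (w j)

section PolicyGradient

variable {Ω E : Type*} [Fintype Ω]

/-- The policy gradient `∑ τ, p τ • (R τ • g τ)` of the reward `R`, for trajectory weights `p`
and score map `g`. The weights need not be normalized, and `g` is an arbitrary map rather than
the gradient of a log-likelihood. -/
def policyGradient [AddCommGroup E] [Module ℝ E] (p R : Ω → ℝ) (g : Ω → E) : E :=
  ∑ τ, p τ • (R τ • g τ)

theorem policyGradient_sub [AddCommGroup E] [Module ℝ E] (p R R' : Ω → ℝ) (g : Ω → E) :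
    policyGradient p (R - R') g = policyGradient p R g - policyGradient p R' g := by
  simp only [policyGradient, Pi.sub_apply, sub_smul, smul_sub, Finset.sum_sub_distrib]

variable [SeminormedAddCommGroup E] [NormedSpace ℝ E] {p : Ω → ℝ}

theorem norm_policyGradient_le_sqrt_mul_sqrt (hp : ∀ τ, 0 ≤ p τ) (R : Ω → ℝ) (g : Ω → E) :
    ‖policyGradient p R g‖ ≤ √(∑ τ, p τ * R τ ^ 2) * √(∑ τ, p τ * ‖g τ‖ ^ 2) := by
  have norm_term (τ : Ω) :
      ‖p τ • (R τ • g τ)‖ = √(p τ * R τ ^ 2) * √(p τ * ‖g τ‖ ^ 2) := by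
    rw [norm_smul, norm_smul, Real.norm_of_nonneg (hp τ), Real.norm_eq_abs,
      Real.sqrt_mul (hp τ), Real.sqrt_mul (hp τ), Real.sqrt_sq_eq_abs,
      Real.sqrt_sq (norm_nonneg _), mul_mul_mul_comm, Real.mul_self_sqrt (hp τ)]
  calc
    ‖policyGradient p R g‖ ≤ ∑ τ, ‖p τ • (R τ • g τ)‖ := norm_sum_le _ _
    _ = ∑ τ, √(p τ * R τ ^ 2) * √(p τ * ‖g τ‖ ^ 2) := by simp only [norm_term]
    _ ≤ √(∑ τ, p τ * R τ ^ 2) * √(∑ τ, p τ * ‖g τ‖ ^ 2) :=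
      Real.sum_sqrt_mul_sqrt_le _ (fun τ ↦ mul_nonneg (hp τ) (sq_nonneg _))
        fun τ ↦ mul_nonneg (hp τ) (sq_nonneg _)

theorem sqrt_sum_mul_sq_le_of_abs_le (hp : ∀ τ, 0 ≤ p τ) {R : Ω → ℝ} {C : ℝ} (hC : 0 ≤ C)
    (hR : ∀ τ, |R τ| ≤ C) : √(∑ τ, p τ * R τ ^ 2) ≤ √(∑ τ, p τ) * C :=
  calc
    √(∑ τ, p τ * R τ ^ 2) ≤ √(∑ τ, p τ * C ^ 2) :=
      Real.sqrt_le_sqrt <| Finset.sum_le_sum fun τ _ ↦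
        mul_le_mul_of_nonneg_left (sq_le_sq' (abs_le.mp (hR τ)).1 (abs_le.mp (hR τ)).2) (hp τ)
    _ = √(∑ τ, p τ) * C := by
      rw [← Finset.sum_mul, Real.sqrt_mul (Finset.sum_nonneg fun τ _ ↦ hp τ), Real.sqrt_sq hC]

theorem rubric_policy_gradient_gap_le_general {ι : Type*} [Fintype ι] [DecidableEq ι]
    (hp : ∀ τ, 0 ≤ p τ) (g : Ω → E) (w : ι → ℝ) (S : Ω → Finset ι) (N : Finset ι)
    (hN : ∀ τ, Finset.univ \ S τ ⊆ N) :
    ‖policyGradient p (fun _ ↦ ∑ j, w j) g - policyGradient p (fun τ ↦ ∑ j ∈ S τ, w j) g‖ ≤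
      √(∑ τ, p τ) * √(∑ τ, p τ * ‖g τ‖ ^ 2) * ∑ j ∈ N, |w j| := by
  have gap_le (τ : Ω) : |∑ j, w j - ∑ j ∈ S τ, w j| ≤ ∑ j ∈ N, |w j| :=
    norm_sum_sub_sum_le_sum_norm w (Finset.subset_univ _) (hN τ)
  have weight_nonneg : 0 ≤ ∑ j ∈ N, |w j| := Finset.sum_nonneg fun j _ ↦ abs_nonneg (w j)
  rw [← policyGradient_sub, mul_right_comm]
  exact (norm_policyGradient_le_sqrt_mul_sqrt hp _ g).trans <|
    mul_le_mul_of_nonneg_right (sqrt_sum_mul_sq_le_of_abs_le hp weight_nonneg gap_le)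
      (Real.sqrt_nonneg _)

end PolicyGradient

/-- Rubric-based gradient gap bound: the deviation of the estimated policy gradient
(using reward `R_T τ = ∑ j ∈ S τ, w j`) from the ideal policy gradient (using
`R_I τ = ∑ j, w j`) is bounded by the weighted L² norm of the score times the ℓ¹ norm
of the weights of the unmet rubrics `N`. -/
theorem rubric_policy_gradient_gap_le
    {Ω : Type*} [Fintype Ω] [Nonempty Ω]
    {E : Type*} [NormedAddCommGroup E] [InnerProductSpace ℝ E]
    (p : Ω → ℝ) (hp0 : ∀ τ, 0 ≤ p τ) (hp1 : ∑ τ, p τ = 1)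
    (g : Ω → E)
    {K : ℕ} (w : Fin K → ℝ) (hw : ∀ j, 0 ≤ w j)
    (S : Ω → Finset (Fin K))
    (N : Finset (Fin K))
    (hN : ∀ τ, Finset.univ \ S τ ⊆ N) :
    ‖(∑ τ, p τ • ((∑ j, w j) • g τ)) -
        ∑ τ, p τ • ((∑ j ∈ S τ, w j) • g τ)‖ ≤
      Real.sqrt (∑ τ, p τ * ‖g τ‖ ^ 2) * ∑ j ∈ N, w j := by
  simpa only [policyGradient, hp1, Real.sqrt_one, one_mul, abs_of_nonneg (hw _)] using
    rubric_policy_gradient_gap_le_general hp0 g w S N hN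
end
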